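/- There exists a countably infinite family (α_i)_{i∈ℕ} of left-c.e. reals such that for all i ≠ j the reals α_i and α_j are ≤_S^tot-incomparable (neither α_i ≤_S^tot α_j nor α_j ≤_S^tot α_i), and such that each α_i is ≤_S^tot-incomparable with every computable real. -/

import Mathlib

/-- A real is left-c.e. if some computable nondecreasing sequence of rationals converges to it. -/
def LeftCE (α : ℝ) : Prop :=
  ∃ a : ℕ → ℚ, Computable a ∧ Monotone a ∧
    Filter.Tendsto (fun n => (a n : ℝ)) Filter.atTop (nhds α)

/-- A real is computable if some computable sequence of rationals approximates it
with error at most `2^{-n}` at stage `n`. -/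
def ComputableReal (γ : ℝ) : Prop :=
  ∃ q : ℕ → ℚ, Computable q ∧ ∀ n, |γ - (q n : ℝ)| ≤ (2 : ℝ)⁻¹ ^ n

/-- Total Solovay reducibility: `α ≤_S^tot β`. -/
def TotalSolovayReducible (α β : ℝ) : Prop :=
  ∃ c : ℚ, 0 < c ∧ ∃ f : ℚ → ℚ, Computable f ∧
    ∀ q : ℚ, (q : ℝ) < β → (f q : ℝ) < α ∧ α - (f q : ℝ) < (c : ℝ) * (β - (q : ℝ))

/-! All members `α k` of the antichain are built at once by a finite injury priority argument.
Each code of a computable function is a strategy. It sees the *history* of the strategies of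
higher priority, which confines every `α k` to a *cell*, an interval whose width does not depend
on `k`. When its computation converges, it moves all members to the right within their cells, to
new cells it prescribes: it may put one member `α i` close to `3/4` of its old cell, whereas all
others are put very close to the *probe* at `1/4`. Hence the limit sequence obeys every total
computable strategy at some history, and this genericity alone yields all the incomparabilities.

To defeat a reduction `f` of `α i` to `α j` with constant `c`, a strategy computes `f q`
for the probe `q` of `α j`. If `f q` lies to the left of the midpoint of the cell of `α i`, it moves
`α i` far away from `f q` and `α j` close to `q`; otherwise it leaves `α i` to the left of `f q`.
This strategy is a total computable function because `f` is.
To defeat a reduction `f` of a computable `γ` to `α j`, it puts `α j` so close to `q` that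
`c * (α j - q)` drops below a positive lower bound for `γ - f q`, which can be computed from `f q`.
A reduction of `α i` to a computable real would make `α i` computable, which the previous case
excludes because total Solovay reducibility is reflexive. -/

section Computability

variable {α β σ : Type*} [Primcodable α] [Primcodable β] [Primcodable σ]

theorem computablePred_comp {p : β → Prop} {f : α → β} (hp : ComputablePred p)
    (hf : Computable f) : ComputablePred fun a => p (f a) := by
  classical exact (hp.decide.comp hf).computablePred

theorem computablePred_and {p q : α → Prop} (hp : ComputablePred p) (hq : ComputablePred q) :
    ComputablePred fun a => p a ∧ q a := by
  classical
  exact ((Primrec.and.to_comp.comp hp.decide hq.decide).of_eq fun a =>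
    (Bool.decide_and (p a) (q a)).symm).computablePred

theorem computablePred_or {p q : α → Prop} (hp : ComputablePred p) (hq : ComputablePred q) :
    ComputablePred fun a => p a ∨ q a := by
  classical
  exact ((Primrec.or.to_comp.comp hp.decide hq.decide).of_eq fun a =>
    (Bool.decide_or (p a) (q a)).symm).computablePred

theorem computablePred_eq {f g : α → β} (hf : Computable f) (hg : Computable g) :
    ComputablePred fun a => f a = g a := by
  classical exact (Primrec.eq.decide.to_comp.comp hf hg).computablePred

theorem computable_ite {p : α → Prop} [DecidablePred p] {f g : α → β} (hp : ComputablePred p)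
    (hf : Computable f) (hg : Computable g) : Computable fun a => if p a then f a else g a :=
  (Computable.cond hp.decide hf hg).of_eq fun a => Bool.cond_decide (p a) _ _

theorem computable_list_foldl {f : σ → α → σ} (hf : Computable₂ f) (b : σ) :
    Computable (List.foldl f b) := by
  have hstep : Computable₂ fun (l : List α) (p : ℕ × σ) => (l[p.1]?).elim p.2 (f p.2) :=
    (Computable.option_casesOn
      (Computable.list_getElem?.comp Computable.fst (Computable.fst.comp Computable.snd))
      (Computable.snd.comp Computable.snd)
      (hf.comp (Computable.snd.comp (Computable.snd.comp Computable.fst))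
        Computable.snd).to₂).of_eq
      fun ⟨l, n, s⟩ => by dsimp only; cases l[n]? <;> rfl
  have hrec (l : List α) (n : ℕ) :
      Nat.rec b (fun n s => (l[n]?).elim s (f s)) n = (l.take n).foldl f b := by
    induction n with
    | zero => simp
    | succ n ih => cases h : l[n]? <;> simp [List.take_add_one, h, ih]
  exact (Computable.nat_rec Computable.list_length (Computable.const b) hstep).of_eq fun l => by
    rw [hrec, List.take_length]

theorem computable_list_foldr {f : α → σ → σ} (hf : Computable₂ f) (b : σ) :
    Computable (List.foldr f b) :=
  ((computable_list_foldl (hf.comp Computable.snd Computable.fst).to₂ b).comp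
    Computable.list_reverse).of_eq fun _ => List.foldl_reverse

theorem primrec_nat_dvd : PrimrecRel fun m n : ℕ => m ∣ n :=
  (Primrec.eq.comp (Primrec.nat_mod.comp Primrec.snd Primrec.fst) (Primrec.const 0)).of_eq
    fun _ => (Nat.dvd_iff_mod_eq_zero).symm

theorem primrec_nat_gcd : Primrec₂ Nat.gcd := by
  have hdvd : PrimrecRel fun (p : ℕ × ℕ) d => d ∣ p.1 ∧ d ∣ p.2 :=
    (primrec_nat_dvd.comp Primrec.snd (Primrec.fst.comp Primrec.fst)).and
      (primrec_nat_dvd.comp Primrec.snd (Primrec.snd.comp Primrec.fst))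
  refine (Primrec.nat_findGreatest (Primrec.nat_add.comp Primrec.fst Primrec.snd) hdvd).of_eq
    fun ⟨a, b⟩ => Nat.findGreatest_eq_iff.2 ⟨?_, fun _ => ⟨Nat.gcd_dvd_left a b,
      Nat.gcd_dvd_right a b⟩, fun {d} hlt hle hd => ?_⟩
  · rcases Nat.eq_zero_or_pos a with rfl | ha
    · simp
    · exact (Nat.gcd_le_left b ha).trans (Nat.le_add_right a b)
  · have hgcd : d ∣ a.gcd b := Nat.dvd_gcd hd.1 hd.2
    have hpos : 0 < a.gcd b := Nat.gcd_pos_iff.2 (by dsimp only at hle; omega)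
    exact hlt.not_ge (Nat.le_of_dvd hpos hgcd)

theorem primrec_nat_count {p : ℕ → Prop} [DecidablePred p] (hp : PrimrecPred p) :
    Primrec (Nat.count p) :=
  (Primrec.list_length.comp ((Primrec.listFilter hp).comp Primrec.list_range)).of_eq
    fun _ => List.countP_eq_length_filter.symm

theorem primrec_int_natAbs : Primrec Int.natAbs :=
  (Primrec.nat_div.comp (Primrec.succ.comp Primrec.encode) (Primrec.const 2)).of_eq fun z => by
    cases z with
    | ofNat n => change (2 * n + 1) / 2 = n; omega
    | negSucc n => change (2 * n + 1 + 1) / 2 = n + 1; omega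

theorem primrec_int_toNat : Primrec Int.toNat :=
  (Primrec.ite (primrec_nat_dvd.comp (Primrec.const 2) Primrec.encode)
    (Primrec.nat_div.comp Primrec.encode (Primrec.const 2)) (Primrec.const 0)).of_eq fun z => by
    cases z with
    | ofNat n =>
      change (if 2 ∣ 2 * n then 2 * n / 2 else 0) = n
      simp
    | negSucc n =>
      change (if 2 ∣ 2 * n + 1 then (2 * n + 1) / 2 else 0) = 0
      simp [Nat.dvd_add_right]

end Computability

section RationalArithmetic

variable {α : Type*} [Primcodable α]

/-- The pair of naturals by which Mathlib encodes a rational before compressing the range of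
codes to all of `ℕ`; see `encode_rat_eq_count`. -/
def ratCode (q : ℚ) : ℕ := Nat.pair (Encodable.encode q.num) q.den

theorem mem_range_ratCode_iff (n : ℕ) : n ∈ Set.range ratCode ↔
    0 < n.unpair.2 ∧ (Denumerable.ofNat ℤ n.unpair.1).natAbs.gcd n.unpair.2 = 1 := by
  constructor
  · rintro ⟨q, rfl⟩
    rw [ratCode, Nat.unpair_pair, Denumerable.ofNat_encode]
    exact ⟨q.pos, q.reduced⟩
  · rintro ⟨hpos, hcop⟩
    exact ⟨⟨Denumerable.ofNat ℤ n.unpair.1, n.unpair.2, hpos.ne', hcop⟩, by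
      rw [ratCode, Denumerable.encode_ofNat, Nat.pair_unpair]⟩

theorem primrecPred_mem_range_ratCode : PrimrecPred (· ∈ Set.range ratCode) := by
  have hfst : Primrec fun n : ℕ => n.unpair.1 := Primrec.fst.comp Primrec.unpair
  have hsnd : Primrec fun n : ℕ => n.unpair.2 := Primrec.snd.comp Primrec.unpair
  exact ((Primrec.nat_lt.comp (Primrec.const 0) hsnd).and (Primrec.eq.comp
    (primrec_nat_gcd.comp (primrec_int_natAbs.comp ((Primrec.ofNat ℤ).comp hfst)) hsnd)
    (Primrec.const 1))).of_eq fun n => (mem_range_ratCode_iff n).symm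

-- The instance is explicit because `ratCode` itself is also an encoding of `ℚ` in Mathlib.
theorem encode_rat_eq_count [inst : DecidablePred (· ∈ Set.range ratCode)] (q : ℚ) :
    Primcodable.toEncodable.encode q = Nat.count (· ∈ Set.range ratCode) (ratCode q) := by
  rw [Subsingleton.elim inst (Encodable.decidableRangeEncode ℚ)]
  rfl

theorem computable_ratCode : Computable ratCode := by
  classical
  have hP : ComputablePred fun p : ℚ × ℕ =>
      p.2 ∈ Set.range ratCode ∧ Nat.count (· ∈ Set.range ratCode) p.2 =
        Primcodable.toEncodable.encode p.1 :=
    computablePred_and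
      (computablePred_comp primrecPred_mem_range_ratCode.computablePred Computable.snd)
      (computablePred_eq ((primrec_nat_count primrecPred_mem_range_ratCode).to_comp.comp
        Computable.snd) (Computable.encode.comp Computable.fst))
  have hex (q : ℚ) : ∃ n, n ∈ Set.range ratCode ∧
      Nat.count (· ∈ Set.range ratCode) n = Primcodable.toEncodable.encode q :=
    ⟨ratCode q, Set.mem_range_self q, (encode_rat_eq_count q).symm⟩
  refine (Computable.find hP hex).of_eq fun q => ?_
  obtain ⟨hmem, hcount⟩ := Nat.find_spec (hex q)
  exact Nat.count_injective hmem (Set.mem_range_self q) (hcount.trans (encode_rat_eq_count q))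

theorem computable_rat_num : Computable Rat.num :=
  ((Computable.ofNat ℤ).comp (Computable.fst.comp
    (Computable.unpair.comp computable_ratCode))).of_eq fun q => by
    rw [ratCode, Nat.unpair_pair, Denumerable.ofNat_encode]

theorem computable_rat_den : Computable Rat.den :=
  (Computable.snd.comp (Computable.unpair.comp computable_ratCode)).of_eq fun q => by
    rw [ratCode, Nat.unpair_pair]

/-- The rational `(a - b) / (d + 1)`. Naturals in place of an integer numerator keep the
arithmetic of representatives inside the library of primitive recursive functions. -/
def ratOfNats (t : ℕ × ℕ × ℕ) : ℚ := ((t.1 : ℚ) - t.2.1) / (t.2.2 + 1)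

/-- A representative of `q` for `ratOfNats`. -/
def ratToNats (q : ℚ) : ℕ × ℕ × ℕ := (q.num.toNat, (-q.num).toNat, q.den - 1)

theorem ratOfNats_ratToNats (q : ℚ) : ratOfNats (ratToNats q) = q := by
  have hnum : ((q.num.toNat : ℤ) : ℚ) - ((-q.num).toNat : ℤ) = q.num := by
    exact_mod_cast Int.toNat_sub_toNat_neg q.num
  have hden : ((q.den - 1 : ℕ) : ℚ) + 1 = q.den := by
    exact_mod_cast Nat.sub_add_cancel q.pos
  rw [ratOfNats, ratToNats, hden]
  push_cast at hnum
  rw [hnum, Rat.num_div_den]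

theorem computable_ratToNats : Computable ratToNats := by
  have hpos := primrec_int_toNat.to_comp.comp computable_rat_num
  have hneg : Computable fun q : ℚ => (-q.num).toNat :=
    (Primrec.nat_sub.to_comp.comp (primrec_int_natAbs.to_comp.comp computable_rat_num) hpos).of_eq
      fun q => by omega
  exact hpos.pair (hneg.pair (Computable.pred.comp computable_rat_den))

theorem computable_ratToNats_components {f : α → ℚ} (hf : Computable f) :
    Computable (fun a => (ratToNats (f a)).1) ∧ Computable (fun a => (ratToNats (f a)).2.1) ∧
      Computable (fun a => (ratToNats (f a)).2.2) := by
  have h := computable_ratToNats.comp hf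
  exact ⟨Computable.fst.comp h, Computable.fst.comp (Computable.snd.comp h),
    Computable.snd.comp (Computable.snd.comp h)⟩

theorem ratOfNats_eq_iff (t u : ℕ × ℕ × ℕ) : ratOfNats t = ratOfNats u ↔
    t.1 * (u.2.2 + 1) + u.2.1 * (t.2.2 + 1) = u.1 * (t.2.2 + 1) + t.2.1 * (u.2.2 + 1) := by
  have ht : (t.2.2 : ℚ) + 1 ≠ 0 := by positivity
  have hu : (u.2.2 : ℚ) + 1 ≠ 0 := by positivity
  rw [ratOfNats, ratOfNats, div_eq_div_iff ht hu, ← @Nat.cast_inj ℚ]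
  push_cast
  constructor <;> intro h <;> linear_combination h

theorem computable_ratOfNats : Computable ratOfNats := by
  classical
  have hP : ComputablePred fun p : (ℕ × ℕ × ℕ) × ℕ =>
      ratOfNats p.1 = ratOfNats (ratToNats (Denumerable.ofNat ℚ p.2)) := by
    have hadd := Primrec.nat_add.to_comp
    have hmul := Primrec.nat_mul.to_comp
    have ht₁ : Computable fun p : (ℕ × ℕ × ℕ) × ℕ => p.1.1 := Computable.fst.comp Computable.fst
    have ht₂ : Computable fun p : (ℕ × ℕ × ℕ) × ℕ => p.1.2.1 :=
      Computable.fst.comp (Computable.snd.comp Computable.fst)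
    have ht₃ : Computable fun p : (ℕ × ℕ × ℕ) × ℕ => p.1.2.2 :=
      Computable.snd.comp (Computable.snd.comp Computable.fst)
    obtain ⟨hu₁, hu₂, hu₃⟩ := computable_ratToNats_components
      ((Computable.ofNat ℚ).comp (Computable.snd (α := ℕ × ℕ × ℕ)))
    have ht₄ := Computable.succ.comp ht₃
    have hu₄ := Computable.succ.comp hu₃
    exact (computablePred_eq
      (hadd.comp (hmul.comp ht₁ hu₄) (hmul.comp hu₂ ht₄))
      (hadd.comp (hmul.comp hu₁ ht₄) (hmul.comp ht₂ hu₄))).of_eq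
      fun p => (ratOfNats_eq_iff _ _).symm
  have hex (t : ℕ × ℕ × ℕ) : ∃ n, ratOfNats t = ratOfNats (ratToNats (Denumerable.ofNat ℚ n)) :=
    ((Denumerable.eqv ℚ).symm.surjective (ratOfNats t)).imp fun n hn =>
      (ratOfNats_ratToNats (ratOfNats t)).symm.trans (congrArg _ (congrArg _ hn.symm))
  refine ((Computable.ofNat ℚ).comp (Computable.find hP hex)).of_eq fun t => ?_
  rw [← ratOfNats_ratToNats (Denumerable.ofNat ℚ _)]
  exact (Nat.find_spec (hex t)).symm

theorem ratOfNats_add (t u : ℕ × ℕ × ℕ) : ratOfNats t + ratOfNats u =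
    ratOfNats (t.1 * (u.2.2 + 1) + u.1 * (t.2.2 + 1), t.2.1 * (u.2.2 + 1) + u.2.1 * (t.2.2 + 1),
      t.2.2 * u.2.2 + (t.2.2 + u.2.2)) := by
  have ht : (t.2.2 : ℚ) + 1 ≠ 0 := by positivity
  have hu : (u.2.2 : ℚ) + 1 ≠ 0 := by positivity
  have hden : (t.2.2 : ℚ) * u.2.2 + (t.2.2 + u.2.2) + 1 = (t.2.2 + 1) * (u.2.2 + 1) := by ring
  simp only [ratOfNats]
  push_cast
  rw [hden, div_add_div _ _ ht hu]
  ring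

theorem ratOfNats_mul (t u : ℕ × ℕ × ℕ) : ratOfNats t * ratOfNats u =
    ratOfNats (t.1 * u.1 + t.2.1 * u.2.1, t.1 * u.2.1 + t.2.1 * u.1,
      t.2.2 * u.2.2 + (t.2.2 + u.2.2)) := by
  have hden : (t.2.2 : ℚ) * u.2.2 + (t.2.2 + u.2.2) + 1 = (t.2.2 + 1) * (u.2.2 + 1) := by ring
  simp only [ratOfNats]
  push_cast
  rw [hden, div_mul_div_comm]
  ring

theorem computable_rat_add {f g : α → ℚ} (hf : Computable f) (hg : Computable g) :
    Computable fun a => f a + g a := by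
  have hadd := Primrec.nat_add.to_comp
  have hmul := Primrec.nat_mul.to_comp
  obtain ⟨hf₁, hf₂, hf₃⟩ := computable_ratToNats_components hf
  obtain ⟨hg₁, hg₂, hg₃⟩ := computable_ratToNats_components hg
  have hf₄ := Computable.succ.comp hf₃
  have hg₄ := Computable.succ.comp hg₃
  exact (computable_ratOfNats.comp <|
    (hadd.comp (hmul.comp hf₁ hg₄) (hmul.comp hg₁ hf₄)).pair <|
      (hadd.comp (hmul.comp hf₂ hg₄) (hmul.comp hg₂ hf₄)).pair <|
        hadd.comp (hmul.comp hf₃ hg₃) (hadd.comp hf₃ hg₃)).of_eq fun a =>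
    (ratOfNats_add _ _).symm.trans <|
      congrArg₂ _ (ratOfNats_ratToNats (f a)) (ratOfNats_ratToNats (g a))

theorem computable_rat_mul {f g : α → ℚ} (hf : Computable f) (hg : Computable g) :
    Computable fun a => f a * g a := by
  have hadd := Primrec.nat_add.to_comp
  have hmul := Primrec.nat_mul.to_comp
  obtain ⟨hf₁, hf₂, hf₃⟩ := computable_ratToNats_components hf
  obtain ⟨hg₁, hg₂, hg₃⟩ := computable_ratToNats_components hg
  exact (computable_ratOfNats.comp <|
    (hadd.comp (hmul.comp hf₁ hg₁) (hmul.comp hf₂ hg₂)).pair <|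
      (hadd.comp (hmul.comp hf₁ hg₂) (hmul.comp hf₂ hg₁)).pair <|
        hadd.comp (hmul.comp hf₃ hg₃) (hadd.comp hf₃ hg₃)).of_eq fun a =>
    (ratOfNats_mul _ _).symm.trans <|
      congrArg₂ _ (ratOfNats_ratToNats (f a)) (ratOfNats_ratToNats (g a))

theorem computable_rat_sub {f g : α → ℚ} (hf : Computable f) (hg : Computable g) :
    Computable fun a => f a - g a :=
  (computable_rat_add hf (computable_rat_mul (Computable.const (-1)) hg)).of_eq fun a => by ring

theorem computablePred_rat_lt {f g : α → ℚ} (hf : Computable f) (hg : Computable g) :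
    ComputablePred fun a => f a < g a := by
  have hpos : Computable fun a => (g a - f a).num.toNat :=
    primrec_int_toNat.to_comp.comp (computable_rat_num.comp (computable_rat_sub hg hf))
  exact (computablePred_comp (Primrec.nat_lt.comp (Primrec.const 0) Primrec.id).computablePred
    hpos).of_eq fun a => by rw [id, Int.lt_toNat, Nat.cast_zero, Rat.num_pos, sub_pos]

theorem computable_rat_pow (x : ℚ) {f : α → ℕ} (hf : Computable f) :
    Computable fun a => x ^ f a := by
  have hmul : Computable₂ fun (_ : α) (p : ℕ × ℚ) => p.2 * x :=
    computable_rat_mul (Computable.snd.comp Computable.snd) (Computable.const x)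
  refine (Computable.nat_rec hf (Computable.const 1) hmul).of_eq fun a => ?_
  induction f a with
  | zero => exact (pow_zero x).symm
  | succ n ih => rw [pow_succ, ← ih]

end RationalArithmetic

section ComputableReal

variable {α γ : ℝ}

theorem exists_mul_two_inv_pow_le_one (c : ℝ) : ∃ m : ℕ, c * (2 : ℝ)⁻¹ ^ m ≤ 1 := by
  obtain ⟨m, hm⟩ := pow_unbounded_of_one_lt c one_lt_two
  refine ⟨m, ?_⟩
  rw [inv_pow, ← div_eq_mul_inv]
  exact (div_le_one (by positivity)).2 hm.le

theorem ComputableReal.of_abs_sub_le_mul {c : ℝ} {q : ℕ → ℚ} (hq : Computable q)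
    (h : ∀ n, |γ - q n| ≤ c * (2 : ℝ)⁻¹ ^ n) : ComputableReal γ := by
  obtain ⟨m, hm⟩ := exists_mul_two_inv_pow_le_one c
  refine ⟨fun n => q (m + n),
    hq.comp (Primrec.nat_add.to_comp.comp (Computable.const m) Computable.id), fun n => ?_⟩
  calc |γ - q (m + n)| ≤ c * (2 : ℝ)⁻¹ ^ (m + n) := h (m + n)
    _ = c * (2 : ℝ)⁻¹ ^ m * (2 : ℝ)⁻¹ ^ n := by rw [pow_add, mul_assoc]
    _ ≤ (2 : ℝ)⁻¹ ^ n := mul_le_of_le_one_left (by positivity) hm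

theorem ComputableReal.exists_lower (hγ : ComputableReal γ) :
    ∃ t : ℕ → ℚ, Computable t ∧ ∀ n, (t n : ℝ) < γ ∧ γ - t n ≤ 3 * (2 : ℝ)⁻¹ ^ n := by
  obtain ⟨q, hq, hqγ⟩ := hγ
  refine ⟨fun n => q n - 2 * (2 : ℚ)⁻¹ ^ n, computable_rat_sub hq (computable_rat_mul
    (Computable.const 2) (computable_rat_pow _ Computable.id)), fun n => ?_⟩
  have hpos : (0 : ℝ) < (2 : ℝ)⁻¹ ^ n := by positivity
  obtain ⟨hlow, hup⟩ := abs_le.1 (hqγ n)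
  push_cast
  constructor <;> linarith

theorem TotalSolovayReducible.refl (α : ℝ) : TotalSolovayReducible α α :=
  ⟨2, two_pos, id, Computable.id, fun q hq => ⟨hq, by push_cast [id]; linarith⟩⟩

theorem TotalSolovayReducible.computableReal (h : TotalSolovayReducible α γ)
    (hγ : ComputableReal γ) : ComputableReal α := by
  obtain ⟨c, hc, f, hf, hred⟩ := h
  obtain ⟨t, ht, htγ⟩ := hγ.exists_lower
  refine .of_abs_sub_le_mul (c := c * 3) (hf.comp ht) fun n => ?_
  obtain ⟨hlt, hle⟩ := htγ n
  obtain ⟨hlow, hup⟩ := hred (t n) hlt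
  rw [abs_of_pos (sub_pos.2 hlow), mul_assoc]
  exact hup.le.trans (by gcongr)

-- Not uniform in `γ`: the algorithm depends on whether `γ` is rational.
theorem computablePred_rat_cast_eq (γ : ℝ) : ComputablePred fun x : ℚ => (x : ℝ) = γ := by
  by_cases hγ : γ ∈ Set.range ((↑) : ℚ → ℝ)
  · obtain ⟨y, rfl⟩ := hγ
    exact (computablePred_eq Computable.id (Computable.const y)).of_eq fun x => Rat.cast_inj.symm
  · have hfalse : ComputablePred fun _ : ℚ => False := (Computable.const _).computablePred
    exact hfalse.of_eq fun x => (iff_false_right fun hx => hγ ⟨x, hx⟩).2 id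

theorem ComputableReal.exists_computable_gap (hγ : ComputableReal γ) :
    ∃ N : ℚ → ℕ, Computable N ∧ ∀ x : ℚ, (x : ℝ) ≠ γ → (2 : ℝ)⁻¹ ^ N x ≤ |γ - x| := by
  classical
  obtain ⟨s, hs, hsγ⟩ := hγ
  let Separated (x : ℚ) (n : ℕ) : Prop := (x : ℝ) = γ ∨ 2 * (2 : ℚ)⁻¹ ^ n < |s n - x|
  have hcomp : ComputablePred fun p : ℚ × ℕ => Separated p.1 p.2 := by
    have hx : Computable (Prod.fst : ℚ × ℕ → ℚ) := Computable.fst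
    have hsn : Computable fun p : ℚ × ℕ => s p.2 := hs.comp Computable.snd
    have herr : Computable fun p : ℚ × ℕ => 2 * (2 : ℚ)⁻¹ ^ p.2 :=
      computable_rat_mul (Computable.const 2) (computable_rat_pow _ Computable.snd)
    refine computablePred_or (computablePred_comp (computablePred_rat_cast_eq γ) hx)
      ((computablePred_or (computablePred_rat_lt herr (computable_rat_sub hsn hx))
        (computablePred_rat_lt herr (computable_rat_sub hx hsn))).of_eq fun p => ?_)
    rw [lt_abs, neg_sub]
  have hex (x : ℚ) : ∃ n, Separated x n := by
    by_cases hx : (x : ℝ) = γ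
    · exact ⟨0, Or.inl hx⟩
    have hgap : 0 < |γ - x| := abs_pos.2 (sub_ne_zero.2 (Ne.symm hx))
    obtain ⟨n, hn⟩ := exists_pow_lt_of_lt_one (div_pos hgap three_pos)
      (inv_lt_one_of_one_lt₀ (one_lt_two (α := ℝ)))
    refine ⟨n, Or.inr ?_⟩
    rw [← Rat.cast_lt (K := ℝ)]
    push_cast
    linarith [abs_sub_le γ (s n) x, hsγ n]
  refine ⟨_, Computable.find hcomp hex, fun x hx => ?_⟩
  have hsep := (Nat.find_spec (hex x)).resolve_left hx
  rw [← Rat.cast_lt (K := ℝ)] at hsep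
  push_cast at hsep
  have htri := abs_sub_le (s (Nat.find (hex x)) : ℝ) γ x
  rw [abs_sub_comm _ γ] at htri
  linarith [hsγ (Nat.find (hex x))]

end ComputableReal

section Cells

/-- A move `(o, n)` of a strategy: the real singled out by `o`, if any, is put near `3/4` of its
current cell and all others near `1/4`, up to an error proportional to `2⁻ⁿ`. -/
abbrev Move : Type := Option ℕ × ℕ

/-- The outcomes of the strategies of highest priority, the lowest of these priorities at the head;
the outcome `none` means that the strategy has not moved. -/
abbrev History : Type := List (Option Move)

/-- The ratio of the width of the cell after an outcome to the width of the cell before it. -/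
def cellScale : Option Move → ℚ
  | none => 4⁻¹
  | some a => 2⁻¹ ^ a.2 / 8

/-- The displacement of the left endpoint of the `k`-th cell caused by an outcome, relative to the
width of the cell. The last summand leaves room for a query strictly to the left of the new cell. -/
def cellOffset (k : ℕ) : Option Move → ℚ
  | none => 0
  | some a => (if a.1 = some k then 3 / 4 else 4⁻¹) + 2⁻¹ ^ a.2 / 8

/-- The common width of the cells assigned to a history. -/
def cellWidth : History → ℚ
  | [] => 1
  | o :: h => cellScale o * cellWidth h

/-- The left endpoint of the `k`-th cell of a history. -/
def cellLeft (k : ℕ) : History → ℚ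
  | [] => 0
  | o :: h => cellLeft k h + cellOffset k o * cellWidth h

/-- The right endpoint of the `k`-th cell of a history. -/
def cellRight (k : ℕ) (h : History) : ℚ := cellLeft k h + cellWidth h

/-- The interval in which a history confines the `k`-th real. -/
def cell (k : ℕ) (h : History) : Set ℝ := Set.Icc (cellLeft k h : ℝ) (cellRight k h)

theorem cellScale_pos (o : Option Move) : 0 < cellScale o := by
  cases o <;> simp only [cellScale] <;> positivity

theorem cellOffset_nonneg (k : ℕ) (o : Option Move) : 0 ≤ cellOffset k o := by
  cases o <;> simp only [cellOffset] <;> positivity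

theorem cellOffset_add_cellScale_le_one (k : ℕ) (o : Option Move) :
    cellOffset k o + cellScale o ≤ 1 := by
  cases o with
  | none => norm_num [cellOffset, cellScale]
  | some a =>
    have hpow : (2⁻¹ : ℚ) ^ a.2 ≤ 1 := pow_le_one₀ (by norm_num) (by norm_num)
    have hif : (if a.1 = some k then 3 / 4 else 4⁻¹ : ℚ) ≤ 3 / 4 := by split <;> norm_num
    simp only [cellOffset, cellScale]
    linarith

theorem cellScale_none_le_cellOffset (k : ℕ) (a : Move) :
    cellScale none ≤ cellOffset k (some a) := by
  have hpow : (0 : ℚ) ≤ 2⁻¹ ^ a.2 := by positivity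
  have hif : (4⁻¹ : ℚ) ≤ if a.1 = some k then 3 / 4 else 4⁻¹ := by split <;> norm_num
  simp only [cellOffset, cellScale]
  linarith

theorem cellWidth_pos (h : History) : 0 < cellWidth h := by
  induction h with
  | nil => exact one_pos
  | cons o h ih => exact mul_pos (cellScale_pos o) ih

theorem cellLeft_le_cellRight (k : ℕ) (h : History) : cellLeft k h ≤ cellRight k h :=
  le_add_of_nonneg_right (cellWidth_pos h).le

theorem cellLeft_le_cons (k : ℕ) (o : Option Move) (h : History) :
    cellLeft k h ≤ cellLeft k (o :: h) :=
  le_add_of_nonneg_right (mul_nonneg (cellOffset_nonneg k o) (cellWidth_pos h).le)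

theorem cellRight_cons (k : ℕ) (o : Option Move) (h : History) :
    cellRight k (o :: h) = cellLeft k h + (cellOffset k o + cellScale o) * cellWidth h := by
  rw [cellRight, cellLeft, cellWidth, add_mul, add_assoc]

theorem cellRight_cons_le (k : ℕ) (o : Option Move) (h : History) :
    cellRight k (o :: h) ≤ cellRight k h := by
  rw [cellRight_cons, cellRight, add_le_add_iff_left]
  exact mul_le_of_le_one_left (cellWidth_pos h).le (cellOffset_add_cellScale_le_one k o)

theorem cellRight_le_one (k : ℕ) (h : History) : cellRight k h ≤ 1 := by
  induction h with
  | nil => norm_num [cellRight, cellLeft, cellWidth]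
  | cons o h ih => exact (cellRight_cons_le k o h).trans ih

theorem cellLeft_nonneg (k : ℕ) (h : History) : 0 ≤ cellLeft k h := by
  induction h with
  | nil => exact le_rfl
  | cons o h ih => exact ih.trans (cellLeft_le_cons k o h)

theorem cellWidth_le_one (h : History) : cellWidth h ≤ 1 :=
  (le_add_of_nonneg_left (cellLeft_nonneg 0 h)).trans (cellRight_le_one 0 h)

theorem cellRight_none_le_cellLeft_some (k : ℕ) (a : Move) (h : History) :
    cellRight k (none :: h) ≤ cellLeft k (some a :: h) := by
  rw [cellRight_cons, cellLeft, add_le_add_iff_left, cellOffset, zero_add]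
  exact mul_le_mul_of_nonneg_right (cellScale_none_le_cellOffset k a) (cellWidth_pos h).le

theorem computable_cellScale : Computable cellScale :=
  (Computable.option_casesOn Computable.id (Computable.const 4⁻¹)
    (computable_rat_mul (computable_rat_pow _ (Computable.snd.comp Computable.snd))
      (Computable.const 8⁻¹)).to₂).of_eq fun o => by cases o <;> rfl

theorem computable_cellOffset (k : ℕ) : Computable (cellOffset k) := by
  have hfavoured : ComputablePred fun p : Option Move × Move => p.2.1 = some k :=
    computablePred_eq (Computable.fst.comp Computable.snd) (Computable.const _)
  exact (Computable.option_casesOn Computable.id (Computable.const 0)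
    (computable_rat_add
      (computable_ite hfavoured (Computable.const (3 / 4)) (Computable.const 4⁻¹))
      (computable_rat_mul (computable_rat_pow _ (Computable.snd.comp Computable.snd))
        (Computable.const 8⁻¹))).to₂).of_eq fun o => by cases o <;> rfl

theorem computable_cellLeft_prod_cellWidth (k : ℕ) :
    Computable fun h => (cellLeft k h, cellWidth h) := by
  let step (o : Option Move) (p : ℚ × ℚ) : ℚ × ℚ :=
    (p.1 + cellOffset k o * p.2, cellScale o * p.2)
  have hstep : Computable₂ step :=
    ((computable_rat_add (Computable.fst.comp Computable.snd) (computable_rat_mul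
      ((computable_cellOffset k).comp Computable.fst) (Computable.snd.comp Computable.snd))).pair
    (computable_rat_mul (computable_cellScale.comp Computable.fst)
      (Computable.snd.comp Computable.snd))).to₂
  refine (computable_list_foldr hstep (0, 1)).of_eq fun h => ?_
  induction h with
  | nil => rfl
  | cons o h ih => rw [List.foldr_cons, ih]; rfl

theorem computable_cellLeft (k : ℕ) : Computable (cellLeft k) :=
  Computable.fst.comp (computable_cellLeft_prod_cellWidth k)

theorem computable_cellWidth : Computable cellWidth :=
  Computable.snd.comp (computable_cellLeft_prod_cellWidth 0)

end Cells

section PriorityConstruction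

open Filter Nat.Partrec

/-- The response of the `e`-th strategy to a history after `s` steps of computation; `none` as
long as the computation of the `e`-th code has not converged. -/
def response (s e : ℕ) (h : History) : Option Move :=
  (Code.evaln s (Denumerable.ofNat Code e) (Encodable.encode h)).bind Encodable.decode

/-- The history of the first `e` strategies at stage `s`. -/
def stageHistory (s : ℕ) : ℕ → History
  | 0 => []
  | e + 1 => response s e (stageHistory s e) :: stageHistory s e

/-- The stage `s` approximation from below to the `k`-th real of the construction. -/
def stageApprox (k s : ℕ) : ℚ := cellLeft k (stageHistory s s)

theorem response_mono {s t e : ℕ} {h : History} {a : Move} (hst : s ≤ t)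
    (hs : response s e h = some a) : response t e h = some a := by
  obtain ⟨x, hx, ha⟩ := Option.bind_eq_some_iff.1 hs
  exact Option.bind_eq_some_iff.2 ⟨x, Code.evaln_mono hst hx, ha⟩

theorem eventually_response_eq (e : ℕ) (h : History) :
    ∃ o, ∀ᶠ s in atTop, response s e h = o := by
  by_cases hconv : ∃ s a, response s e h = some a
  · obtain ⟨s, a, hs⟩ := hconv
    exact ⟨some a, (eventually_ge_atTop s).mono fun t ht => response_mono ht hs⟩
  · push Not at hconv
    exact ⟨none, .of_forall fun s => Option.eq_none_iff_forall_ne_some.2 (hconv s)⟩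

theorem eventually_stageHistory_eq (e : ℕ) : ∃ h, ∀ᶠ s in atTop, stageHistory s e = h := by
  induction e with
  | zero => exact ⟨[], .of_forall fun _ => rfl⟩
  | succ e ih =>
    obtain ⟨h, hh⟩ := ih
    obtain ⟨o, ho⟩ := eventually_response_eq e h
    refine ⟨o :: h, ?_⟩
    filter_upwards [hh, ho] with s hs hos
    rw [stageHistory, hs, hos]

theorem exists_eventually_response_eq {r : History → Move} (hr : Computable r) :
    ∃ e, ∀ h, ∀ᶠ s in atTop, response s e h = some (r h) := by
  obtain ⟨c, hc⟩ := Code.exists_code.1 hr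
  refine ⟨Encodable.encode c, fun h => ?_⟩
  have heval : Encodable.encode (r h) ∈ Code.eval c (Encodable.encode h) := by
    rw [hc]; simp
  obtain ⟨s, hs⟩ := Code.evaln_complete.1 heval
  refine (eventually_ge_atTop s).mono fun t ht => Option.bind_eq_some_iff.2
    ⟨_, ?_, Encodable.encodek (r h)⟩
  rw [Denumerable.ofNat_encode]
  exact Code.evaln_mono ht hs

theorem exists_eventually_stageHistory_eq_cons {r : History → Move} (hr : Computable r) :
    ∃ e h, ∀ᶠ s in atTop, stageHistory s e = some (r h) :: h := by
  obtain ⟨e, he⟩ := exists_eventually_response_eq hr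
  obtain ⟨h, hh⟩ := eventually_stageHistory_eq e
  refine ⟨e + 1, h, ?_⟩
  filter_upwards [hh, he h] with s hs hres
  rw [stageHistory, hs, hres]

-- The histories differ first at a strategy that has started to move in between, and that move
-- takes the cell to the right of its old place.
theorem stageHistory_eq_or_cellRight_le {s t : ℕ} (hst : s ≤ t) (k e : ℕ) :
    stageHistory s e = stageHistory t e ∨
      cellRight k (stageHistory s e) ≤ cellLeft k (stageHistory t e) := by
  induction e with
  | zero => exact Or.inl rfl
  | succ e ih =>
    simp only [stageHistory]
    rcases ih with heq | hle
    · rw [heq]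
      cases hs : response s e (stageHistory t e) with
      | some a => exact Or.inl (by rw [response_mono hst hs])
      | none =>
        cases response t e (stageHistory t e) with
        | none => exact Or.inl rfl
        | some a => exact Or.inr (cellRight_none_le_cellLeft_some k a _)
    · exact Or.inr ((cellRight_cons_le k _ _).trans (hle.trans (cellLeft_le_cons k _ _)))

theorem cellLeft_stageHistory_le {s t : ℕ} (hst : s ≤ t) (k e : ℕ) :
    cellLeft k (stageHistory s e) ≤ cellLeft k (stageHistory t e) := by
  rcases stageHistory_eq_or_cellRight_le hst k e with heq | hle
  · rw [heq]
  · exact (cellLeft_le_cellRight k _).trans hle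

theorem monotone_cellLeft_stageHistory (k s : ℕ) :
    Monotone fun e => cellLeft k (stageHistory s e) :=
  monotone_nat_of_le_succ fun _ => cellLeft_le_cons k _ _

theorem antitone_cellRight_stageHistory (k s : ℕ) :
    Antitone fun e => cellRight k (stageHistory s e) :=
  antitone_nat_of_succ_le fun _ => cellRight_cons_le k _ _

theorem monotone_stageApprox (k : ℕ) : Monotone (stageApprox k) := fun s t hst =>
  (cellLeft_stageHistory_le hst k s).trans (monotone_cellLeft_stageHistory k t hst)

theorem stageApprox_le_one (k s : ℕ) : stageApprox k s ≤ 1 :=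
  (cellLeft_le_cellRight k _).trans (cellRight_le_one k _)

theorem stageApprox_mem_cell (k : ℕ) {s e : ℕ} (hes : e ≤ s) :
    (stageApprox k s : ℝ) ∈ cell k (stageHistory s e) :=
  ⟨Rat.cast_le.2 (monotone_cellLeft_stageHistory k s hes),
    Rat.cast_le.2 ((cellLeft_le_cellRight k _).trans (antitone_cellRight_stageHistory k s hes))⟩

theorem primrec_response : Primrec fun p : (ℕ × ℕ) × History => response p.1.1 p.1.2 p.2 := by
  have hstage : Primrec fun p : (ℕ × ℕ) × History => p.1.1 := Primrec.fst.comp Primrec.fst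
  have hcode : Primrec fun p : (ℕ × ℕ) × History => Denumerable.ofNat Code p.1.2 :=
    (Primrec.ofNat Code).comp (Primrec.snd.comp Primrec.fst)
  have heval := Code.primrec_evaln.comp
    ((hstage.pair hcode).pair (Primrec.encode.comp Primrec.snd))
  exact Primrec.option_bind heval (Primrec.decode.comp Primrec.snd).to₂

theorem primrec_stageHistory_self : Primrec fun s => stageHistory s s := by
  have hstep : Primrec₂ fun (s : ℕ) (p : ℕ × History) => response s p.1 p.2 :: p.2 :=
    Primrec.list_cons.comp
      (primrec_response.comp ((Primrec.fst.pair (Primrec.fst.comp Primrec.snd)).pair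
        (Primrec.snd.comp Primrec.snd))) (Primrec.snd.comp Primrec.snd)
  refine (Primrec.nat_rec' Primrec.id (Primrec.const []) hstep).of_eq fun s => ?_
  have hrec (e : ℕ) : Nat.rec [] (fun e h => response s e h :: h) e = stageHistory s e := by
    induction e with
    | zero => rfl
    | succ e ih => rw [stageHistory, ← ih]
  exact hrec s

theorem computable_stageApprox (k : ℕ) : Computable (stageApprox k) :=
  (computable_cellLeft k).comp primrec_stageHistory_self.to_comp

/-- A sequence of reals is generic if every computable strategy gets to prescribe, at some
history, the next cells of all members of the sequence simultaneously. -/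
def IsGeneric (α : ℕ → ℝ) : Prop :=
  ∀ r : History → Move, Computable r → ∃ h, ∀ k, α k ∈ cell k (some (r h) :: h)

theorem exists_leftCE_isGeneric : ∃ α : ℕ → ℝ, (∀ k, LeftCE (α k)) ∧ IsGeneric α := by
  have hmono (k : ℕ) : Monotone fun s => (stageApprox k s : ℝ) :=
    Rat.cast_mono.comp (monotone_stageApprox k)
  have hbdd (k : ℕ) : BddAbove (Set.range fun s => (stageApprox k s : ℝ)) :=
    ⟨1, Set.forall_mem_range.2 fun s => by exact_mod_cast stageApprox_le_one k s⟩
  have hlim (k : ℕ) := tendsto_atTop_ciSup (hmono k) (hbdd k)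
  refine ⟨fun k => ⨆ s, (stageApprox k s : ℝ),
    fun k => ⟨stageApprox k, computable_stageApprox k, monotone_stageApprox k, hlim k⟩,
    fun r hr => ?_⟩
  obtain ⟨e, h, he⟩ := exists_eventually_stageHistory_eq_cons hr
  refine ⟨h, fun k => isClosed_Icc.mem_of_tendsto (hlim k) ?_⟩
  filter_upwards [he, eventually_ge_atTop e] with s hs hes
  rw [← hs]
  exact stageApprox_mem_cell k hes

end PriorityConstruction

section Antichain

variable {α : ℕ → ℝ} {γ x : ℝ} {a : Move} {h : History} {i j k : ℕ}

/-- The rational at which a strategy queries the reduction it fights: the infimum of the places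
where it can put the `k`-th real without singling out `k`. -/
def cellProbe (k : ℕ) (h : History) : ℚ := cellLeft k h + 4⁻¹ * cellWidth h

/-- The midpoint of the `k`-th cell, to the right of which a strategy puts the `k`-th real if it
singles out `k`, and to the left of which it puts it otherwise. -/
def cellMidpoint (k : ℕ) (h : History) : ℚ := cellLeft k h + 2⁻¹ * cellWidth h

theorem computable_cellProbe (k : ℕ) : Computable (cellProbe k) :=
  computable_rat_add (computable_cellLeft k)
    (computable_rat_mul (Computable.const 4⁻¹) computable_cellWidth)

theorem computable_cellMidpoint (k : ℕ) : Computable (cellMidpoint k) :=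
  computable_rat_add (computable_cellLeft k)
    (computable_rat_mul (Computable.const 2⁻¹) computable_cellWidth)

theorem cellMidpoint_add_lt_of_mem_cell (ha : a.1 = some k) (hx : x ∈ cell k (some a :: h)) :
    cellMidpoint k h + 4⁻¹ * (cellWidth h : ℝ) < x := by
  refine lt_of_lt_of_le ?_ hx.1
  have hwidth : (0 : ℝ) < cellWidth h := Rat.cast_pos.2 (cellWidth_pos h)
  have herr : 0 < (2 : ℝ)⁻¹ ^ a.2 / 8 * cellWidth h := by positivity
  simp only [cellMidpoint, cellLeft, cellOffset, if_pos ha]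
  push_cast
  linarith

theorem cellProbe_lt_of_mem_cell (ha : a.1 ≠ some k) (hx : x ∈ cell k (some a :: h)) :
    cellProbe k h < x := by
  refine lt_of_lt_of_le ?_ hx.1
  have hwidth : (0 : ℝ) < cellWidth h := Rat.cast_pos.2 (cellWidth_pos h)
  have herr : 0 < (2 : ℝ)⁻¹ ^ a.2 / 8 * cellWidth h := by positivity
  simp only [cellProbe, cellLeft, cellOffset, if_neg ha]
  push_cast
  linarith

theorem sub_cellProbe_le_of_mem_cell (ha : a.1 ≠ some k) (hx : x ∈ cell k (some a :: h)) :
    x - cellProbe k h ≤ (2 : ℝ)⁻¹ ^ a.2 * (4⁻¹ * cellWidth h) := by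
  refine (sub_le_sub_right hx.2 _).trans_eq ?_
  simp only [cellRight_cons, cellProbe, cellOffset, cellScale, if_neg ha]
  push_cast
  ring

theorem le_cellMidpoint_of_mem_cell (ha : a.1 ≠ some k) (hx : x ∈ cell k (some a :: h)) :
    x ≤ cellMidpoint k h := by
  have hwidth : (0 : ℝ) < cellWidth h := Rat.cast_pos.2 (cellWidth_pos h)
  have hpow : (2 : ℝ)⁻¹ ^ a.2 ≤ 1 := pow_le_one₀ (by norm_num) (by norm_num)
  have herr := mul_le_of_le_one_left (by positivity : 0 ≤ 4⁻¹ * (cellWidth h : ℝ)) hpow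
  have hmid : (cellMidpoint k h : ℝ) = cellProbe k h + 4⁻¹ * cellWidth h := by
    simp only [cellMidpoint, cellProbe]
    push_cast
    ring
  linarith [sub_cellProbe_le_of_mem_cell ha hx]

theorem IsGeneric.not_totalSolovayReducible (hα : IsGeneric α) (hij : i ≠ j) :
    ¬ TotalSolovayReducible (α i) (α j) := by
  rintro ⟨c, hc, f, hf, hred⟩
  obtain ⟨m, hm⟩ := exists_mul_two_inv_pow_le_one c
  let r (h : History) : Move := (if f (cellProbe j h) < cellMidpoint i h then some i else none, m)
  have hr : Computable r :=
    (computable_ite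
      (computablePred_rat_lt (hf.comp (computable_cellProbe j)) (computable_cellMidpoint i))
      (Computable.const (some i)) (Computable.const none)).pair (Computable.const m)
  obtain ⟨h, hh⟩ := hα r hr
  have hj : (r h).1 ≠ some j := by
    simp only [r]
    split <;> simp [hij]
  obtain ⟨hbelow, hclose⟩ := hred (cellProbe j h) (cellProbe_lt_of_mem_cell hj (hh j))
  by_cases hlt : f (cellProbe j h) < cellMidpoint i h
  · have hi := cellMidpoint_add_lt_of_mem_cell (if_pos hlt) (hh i)
    have hwidth : (0 : ℝ) < cellWidth h := Rat.cast_pos.2 (cellWidth_pos h)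
    have hnear : c * (α j - cellProbe j h) ≤ 4⁻¹ * cellWidth h := calc
      c * (α j - cellProbe j h) ≤ c * ((2 : ℝ)⁻¹ ^ m * (4⁻¹ * cellWidth h)) := by
        gcongr
        exact sub_cellProbe_le_of_mem_cell hj (hh j)
      _ = c * (2 : ℝ)⁻¹ ^ m * (4⁻¹ * cellWidth h) := (mul_assoc _ _ _).symm
      _ ≤ 4⁻¹ * cellWidth h := mul_le_of_le_one_left (by positivity) hm
    linarith [(Rat.cast_lt (K := ℝ)).2 hlt]
  · have hi : (r h).1 ≠ some i := (if_neg hlt).trans_ne (Option.some_ne_none i).symm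
    have hle : (cellMidpoint i h : ℝ) ≤ f (cellProbe j h) := Rat.cast_le.2 (not_lt.1 hlt)
    exact hbelow.not_ge ((le_cellMidpoint_of_mem_cell hi (hh i)).trans hle)

theorem IsGeneric.not_totalSolovayReducible_of_computableReal (hα : IsGeneric α)
    (hγ : ComputableReal γ) (j : ℕ) : ¬ TotalSolovayReducible γ (α j) := by
  rintro ⟨c, hc, f, hf, hred⟩
  obtain ⟨m, hm⟩ := exists_mul_two_inv_pow_le_one c
  obtain ⟨N, hN, hgap⟩ := hγ.exists_computable_gap
  let r (h : History) : Move := (none, m + N (f (cellProbe j h)))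
  have hr : Computable r := (Computable.const none).pair (Primrec.nat_add.to_comp.comp
    (Computable.const m) (hN.comp (hf.comp (computable_cellProbe j))))
  obtain ⟨h, hh⟩ := hα r hr
  have hj : (r h).1 ≠ some j := (Option.some_ne_none j).symm
  obtain ⟨hbelow, hclose⟩ := hred (cellProbe j h) (cellProbe_lt_of_mem_cell hj (hh j))
  have hfar := hgap _ hbelow.ne
  rw [abs_of_pos (sub_pos.2 hbelow)] at hfar
  refine hclose.not_ge (le_trans ?_ hfar)
  have hwidth : 4⁻¹ * (cellWidth h : ℝ) ≤ 1 := by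
    have hle : (cellWidth h : ℝ) ≤ 1 := by exact_mod_cast cellWidth_le_one h
    linarith
  set n := N (f (cellProbe j h))
  calc c * (α j - cellProbe j h)
      ≤ c * ((2 : ℝ)⁻¹ ^ (m + n) * 1) := by
        gcongr
        exact (sub_cellProbe_le_of_mem_cell hj (hh j)).trans (by gcongr)
    _ = c * (2 : ℝ)⁻¹ ^ m * (2 : ℝ)⁻¹ ^ n := by rw [mul_one, pow_add, mul_assoc]
    _ ≤ (2 : ℝ)⁻¹ ^ n := mul_le_of_le_one_left (by positivity) hm

theorem IsGeneric.not_computableReal (hα : IsGeneric α) (i : ℕ) : ¬ ComputableReal (α i) :=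
  fun hi => hα.not_totalSolovayReducible_of_computableReal hi i (.refl (α i))

end Antichain

theorem exists_infinite_totalSolovay_antichain :
    ∃ α : ℕ → ℝ, (∀ i, LeftCE (α i)) ∧
      (∀ i j, i ≠ j →
        ¬ TotalSolovayReducible (α i) (α j) ∧ ¬ TotalSolovayReducible (α j) (α i)) ∧
      (∀ i, ∀ γ : ℝ, ComputableReal γ →
        ¬ TotalSolovayReducible (α i) γ ∧ ¬ TotalSolovayReducible γ (α i)) := by
  obtain ⟨α, hleft, hα⟩ := exists_leftCE_isGeneric
  exact ⟨α, hleft,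
    fun i j hij => ⟨hα.not_totalSolovayReducible hij, hα.not_totalSolovayReducible hij.symm⟩,
    fun i γ hγ => ⟨fun hred => hα.not_computableReal i (hred.computableReal hγ),
      hα.not_totalSolovayReducible_of_computableReal hγ i⟩⟩
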